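/- arXiv:2103.01533 — 5 statements merged into one kernel-verified Lean document; each statement's English description precedes it below -/
import Mathlib

section
/- (Data reconstruction, Theorem 1.) Let K be any set of k pairs in {0,…,n̄−1} × {0,…,u−1}. If M and M' are two message matrices (both with symmetric submatrix M₁ whose lower-right (d̄−k̄) × (d̄−k̄) block is zero) whose code matrices C and C' agree on all columns indexed by K (i.e., f_i(λ_(e,g)) = f'_i(λ_(e,g)) for all i ∈ {0,…,d̄−1} and all (e,g) ∈ K), then M = M'. -/
/-!
Consider the difference `d = m - m'`: it inherits the symmetry and the zero block, and all its row
polynomials vanish at the `k = kbar * u + u0` evaluation points indexed by `K`, which are pairwise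
distinct (`points_injOn`). The exponents in `Jset` are exactly those below `k` together with the
`t * u + (u - 1)` for `kbar ≤ t < dbar`. A row `i ≥ kbar` has zero coefficients at the latter
exponents, so its polynomial has degree below `k` and `k` roots, and the row is zero
(`coeff_eq_zero`). By symmetry every row `i < kbar` now also vanishes at those high exponents, and
the same root count finishes the proof.
-/

/-- The index set J₁ = {t·u + u − 1 : t ∈ {0,…,d̄−1}}. -/
def J1 (u dbar : ℕ) : Finset ℕ := (Finset.range dbar).image (fun t => t * u + (u - 1))

/-- The index set J₂ = {0,…,k−1} \ J₁ where k = k̄·u + u₀. -/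
def J2 (u kbar dbar u0 : ℕ) : Finset ℕ := Finset.range (kbar * u + u0) \ J1 u dbar

/-- The index set J = J₁ ∪ J₂. -/
def Jset (u kbar dbar u0 : ℕ) : Finset ℕ := J1 u dbar ∪ J2 u kbar dbar u0

/-- Raising to the power `u` kills the `η`-part, which separates the first coordinates because
`e * u` is below the order of `ξ`. -/
lemma points_injOn {F : Type*} [Field F] {u nbar : ℕ} (hu : 0 < u) {ξ η : F}
    (hξ : nbar * u ≤ orderOf ξ) (hη : orderOf η = u) {p q : ℕ × ℕ}
    (hp : p.1 < nbar ∧ p.2 < u) (hq : q.1 < nbar ∧ q.2 < u)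
    (h : ξ ^ p.1 * η ^ p.2 = ξ ^ q.1 * η ^ q.2) : p = q := by
  have hηu : η ^ u = 1 := hη ▸ pow_orderOf_eq_one η
  have aux : ∀ e g : ℕ, (ξ ^ e * η ^ g) ^ u = ξ ^ (e * u) := fun e g => by
    rw [mul_pow, ← pow_mul, ← pow_mul, mul_comm g u, pow_mul η, hηu, one_pow, mul_one]
  have h1 : ξ ^ (p.1 * u) = ξ ^ (q.1 * u) := by rw [← aux p.1 p.2, h, aux]
  have lt : ∀ e, e < nbar → e * u < orderOf ξ := fun e he =>
    (Nat.mul_lt_mul_of_pos_right he hu).trans_le hξ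
  have h2 : p.1 = q.1 :=
    Nat.eq_of_mul_eq_mul_right hu (pow_injOn_Iio_orderOf (lt _ hp.1) (lt _ hq.1) h1)
  have hξpos : 0 < orderOf ξ := (Nat.zero_le _).trans_lt (lt _ hp.1)
  have hξ0 : ξ ≠ 0 := by
    rintro rfl
    simp at hξpos
  rw [h2] at h
  have h3 : η ^ p.2 = η ^ q.2 := mul_left_cancel₀ (pow_ne_zero _ hξ0) h
  exact Prod.ext h2 (pow_injOn_Iio_orderOf (hη ▸ hp.2 : p.2 < orderOf η)
    (hη ▸ hq.2 : q.2 < orderOf η) h3)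

/-- A polynomial supported on exponents below `k` with `k` distinct roots has zero coefficients. -/
lemma coeff_eq_zero {F ι : Type*} [Field F] {k : ℕ} {J : Finset ℕ} (hJ : Finset.range k ⊆ J)
    {c : ℕ → F} (hc : ∀ j ∈ J, k ≤ j → c j = 0) {K : Finset ι} {x : ι → F}
    (hx : Set.InjOn x K) (hK : K.card = k) (h : ∀ p ∈ K, ∑ j ∈ J, c j * x p ^ j = 0) :
    ∀ j ∈ J, c j = 0 := by
  classical
  set P : Polynomial F := ∑ j ∈ Finset.range k, Polynomial.C (c j) * Polynomial.X ^ j with hP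
  have hdeg : P.degree < (K.card : ℕ) := by
    rw [hK]
    refine (Polynomial.degree_sum_le _ _).trans_lt ?_
    refine (Finset.sup_lt_iff (WithBot.bot_lt_coe k)).2 fun j hj => ?_
    exact (Polynomial.degree_C_mul_X_pow_le _ _).trans_lt
      (WithBot.coe_lt_coe.2 (Finset.mem_range.1 hj))
  have hP0 : P = 0 := by
    refine Polynomial.eq_zero_of_degree_lt_of_eval_index_eq_zero K hx hdeg fun p hp => ?_
    rw [hP, Polynomial.eval_finsetSum, ← h p hp]
    simp only [Polynomial.eval_mul, Polynomial.eval_C, Polynomial.eval_pow, Polynomial.eval_X]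
    refine Finset.sum_subset hJ fun j hj hjk => ?_
    rw [hc j hj (by simpa using hjk), zero_mul]
  intro j hj
  by_cases hjk : k ≤ j
  · exact hc j hj hjk
  · have h0 : P.coeff j = 0 := by rw [hP0, Polynomial.coeff_zero]
    rw [hP, Polynomial.finsetSum_coeff] at h0
    simpa [Polynomial.coeff_C_mul, Polynomial.coeff_X_pow, Nat.lt_of_not_le hjk] using h0

/-- Data reconstruction, Theorem 1: if two message matrices M, M'
(each with symmetric submatrix M₁ whose lower-right (d̄−k̄) × (d̄−k̄) block is zero)
produce code matrices agreeing on all columns indexed by a set K of k nodes,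
then M = M'. -/
theorem stmt3
    (u nbar kbar dbar u0 : ℕ)
    (hu : 2 ≤ u) (hnbar : 2 ≤ nbar)
    (hkbar : 1 ≤ kbar) (hkd : kbar ≤ dbar) (hdbar : dbar ≤ nbar - 1)
    (hu0 : u0 < u)
    (F : Type*) [Field F] [Fintype F]
    (hdvd : u ∣ Fintype.card F - 1) (hcard : nbar * u < Fintype.card F)
    (ξ η : F) (hξ : orderOf ξ = Fintype.card F - 1) (hη : orderOf η = u)
    (m m' : ℕ → ℕ → F)
    (hsym : ∀ i t : ℕ, i < dbar → t < dbar →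
      m i (t * u + (u - 1)) = m t (i * u + (u - 1)))
    (hzero : ∀ i t : ℕ, kbar ≤ i → i < dbar → kbar ≤ t → t < dbar →
      m i (t * u + (u - 1)) = 0)
    (hsym' : ∀ i t : ℕ, i < dbar → t < dbar →
      m' i (t * u + (u - 1)) = m' t (i * u + (u - 1)))
    (hzero' : ∀ i t : ℕ, kbar ≤ i → i < dbar → kbar ≤ t → t < dbar →
      m' i (t * u + (u - 1)) = 0)
    (K : Finset (ℕ × ℕ))
    (hK : ∀ p ∈ K, p.1 < nbar ∧ p.2 < u)
    (hKcard : K.card = kbar * u + u0)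
    (hagree : ∀ i : ℕ, i < dbar → ∀ p ∈ K,
      ∑ j ∈ Jset u kbar dbar u0, m i j * (ξ ^ p.1 * η ^ p.2) ^ j =
      ∑ j ∈ Jset u kbar dbar u0, m' i j * (ξ ^ p.1 * η ^ p.2) ^ j) :
    ∀ i : ℕ, i < dbar → ∀ j ∈ Jset u kbar dbar u0, m i j = m' i j := by
  classical
  have hinj : Set.InjOn (fun p : ℕ × ℕ => ξ ^ p.1 * η ^ p.2) K := fun p hp q hq h =>
    points_injOn (by omega) (by omega) hη (hK p hp) (hK q hq) h
  have hsub : Finset.range (kbar * u + u0) ⊆ Jset u kbar dbar u0 := by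
    intro j hj
    by_cases h1 : j ∈ J1 u dbar
    · exact Finset.mem_union_left _ h1
    · exact Finset.mem_union_right _ (Finset.mem_sdiff.2 ⟨hj, h1⟩)
  have hmemJ : ∀ t, t < dbar → t * u + (u - 1) ∈ Jset u kbar dbar u0 := fun t ht =>
    Finset.mem_union_left _ (Finset.mem_image_of_mem _ (Finset.mem_range.2 ht))
  have hhigh : ∀ j ∈ Jset u kbar dbar u0, kbar * u + u0 ≤ j →
      ∃ t, kbar ≤ t ∧ t < dbar ∧ j = t * u + (u - 1) := by
    intro j hj hkj
    rcases Finset.mem_union.1 hj with h | h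
    · obtain ⟨t, ht, rfl⟩ := Finset.mem_image.1 h
      refine ⟨t, ?_, Finset.mem_range.1 ht, rfl⟩
      by_contra! hlt
      have := Nat.mul_le_mul_right u (Nat.succ_le_of_lt hlt)
      rw [Nat.succ_mul] at this
      omega
    · have := Finset.mem_range.1 (Finset.mem_sdiff.1 h).1
      omega
  have hrow : ∀ i, i < dbar →
      (∀ t, kbar ≤ t → t < dbar → m i (t * u + (u - 1)) = m' i (t * u + (u - 1))) →
      ∀ j ∈ Jset u kbar dbar u0, m i j = m' i j := by
    intro i hi ht j hj
    refine sub_eq_zero.1 (coeff_eq_zero (c := fun j => m i j - m' i j) hsub ?_ hinj hKcard ?_ j hj)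
    · intro j hj hkj
      obtain ⟨t, h1, h2, rfl⟩ := hhigh j hj hkj
      exact sub_eq_zero.2 (ht t h1 h2)
    · intro p hp
      simp only [sub_mul, Finset.sum_sub_distrib]
      exact sub_eq_zero.2 (hagree i hi p hp)
  have hlow : ∀ i, kbar ≤ i → i < dbar → ∀ j ∈ Jset u kbar dbar u0, m i j = m' i j :=
    fun i h1 h2 => hrow i h2 fun t h3 h4 => by
      rw [hzero i t h1 h2 h3 h4, hzero' i t h1 h2 h3 h4]
  -- Row `i` at the high exponent of `t ≥ kbar` is, by symmetry, an entry of the known row `t`.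
  exact fun i hi => hrow i hi fun t h1 h2 => by
    rw [hsym i t hi h2, hsym' i t hi h2]
    exact hlow t h1 h2 _ (hmemJ i hi)
end

section
/- (Lemma 1.) For all e ∈ {0,…,n̄−1}, all i ∈ {0,…,d̄−1} and all g ∈ {0,…,u−1}, the encoding polynomial and the local polynomial agree at the rack's evaluation points: f_i(λ_(e,g)) = h^(e)_i(λ_(e,g)). -/
/-- Local coefficient h^(e)_{i,j} of the local polynomial of rack e
(display (7) of the paper). -/
def hcoef {F : Type*} [Field F] (u u0 kbar dbar : ℕ) (ξ : F) (m : ℕ → ℕ → F)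
    (e i j : ℕ) : F :=
  if j < u0 then ∑ t ∈ Finset.range (kbar + 1), m i (t * u + j) * ξ ^ (e * t * u)
  else if j < u - 1 then ∑ t ∈ Finset.range kbar, m i (t * u + j) * ξ ^ (e * t * u)
  else ∑ t ∈ Finset.range dbar, m i (t * u + (u - 1)) * ξ ^ (e * t * u)

/-- The number of `t` for which `t * u + r` belongs to `Jset u kbar dbar u0`, for a residue `r < u`
(given `kbar ≤ dbar` and `u0 < u`). -/
def rowLen (u kbar dbar u0 r : ℕ) : ℕ :=
  if r < u0 then kbar + 1 else if r < u - 1 then kbar else dbar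

theorem mem_Jset_iff {u kbar dbar u0 t r : ℕ} (hkd : kbar ≤ dbar) (hu0 : u0 < u) (hr : r < u) :
    t * u + r ∈ Jset u kbar dbar u0 ↔ t < rowLen u kbar dbar u0 r := by
  have h1 : t * u + r ∈ J1 u dbar ↔ r = u - 1 ∧ t < dbar := by
    simp only [J1, Finset.mem_image, Finset.mem_range]
    constructor
    · rintro ⟨s, hs, h⟩
      have hst : s = t := by
        rcases lt_trichotomy s t with hlt | heq | hlt
        · have := Nat.mul_le_mul_right u (Nat.succ_le_of_lt hlt)
          rw [Nat.succ_mul] at this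
          omega
        · exact heq
        · have := Nat.mul_le_mul_right u (Nat.succ_le_of_lt hlt)
          rw [Nat.succ_mul] at this
          omega
      subst hst
      exact ⟨by omega, hs⟩
    · rintro ⟨rfl, ht⟩
      exact ⟨t, ht, rfl⟩
  have h2 : t * u + r < kbar * u + u0 ↔ t < kbar ∨ (t = kbar ∧ r < u0) := by
    rcases lt_trichotomy t kbar with hlt | rfl | hlt
    · have := Nat.mul_le_mul_right u (Nat.succ_le_of_lt hlt)
      rw [Nat.succ_mul] at this
      omega
    · omega
    · have := Nat.mul_le_mul_right u (Nat.succ_le_of_lt hlt)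
      rw [Nat.succ_mul] at this
      omega
  simp only [Jset, J2, Finset.mem_union, Finset.mem_sdiff, Finset.mem_range, h1, h2]
  unfold rowLen
  split_ifs <;> omega

theorem hcoef_eq {F : Type*} [Field F] {u u0 kbar dbar : ℕ} (ξ : F) (m : ℕ → ℕ → F)
    (e i : ℕ) {r : ℕ} (hr : r < u) :
    hcoef u u0 kbar dbar ξ m e i r =
      ∑ t ∈ Finset.range (rowLen u kbar dbar u0 r), m i (t * u + r) * ξ ^ (e * t * u) := by
  unfold hcoef rowLen
  split_ifs with h1 h2
  · rfl
  · rfl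
  · obtain rfl : r = u - 1 := by omega
    rfl

/-- Lemma 1: for all e ∈ {0,…,n̄−1}, i ∈ {0,…,d̄−1}, g ∈ {0,…,u−1},
f_i(λ_(e,g)) = h^(e)_i(λ_(e,g)). -/
theorem stmt4
    (u nbar kbar dbar u0 : ℕ)
    (hu : 2 ≤ u) (hnbar : 2 ≤ nbar)
    (hkbar : 1 ≤ kbar) (hkd : kbar ≤ dbar) (hdbar : dbar ≤ nbar - 1)
    (hu0 : u0 < u)
    (F : Type*) [Field F] [Fintype F]
    (hdvd : u ∣ Fintype.card F - 1) (hcard : nbar * u < Fintype.card F)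
    (ξ η : F) (hξ : orderOf ξ = Fintype.card F - 1) (hη : orderOf η = u)
    (m : ℕ → ℕ → F)
    (hsym : ∀ i t : ℕ, i < dbar → t < dbar →
      m i (t * u + (u - 1)) = m t (i * u + (u - 1)))
    (hzero : ∀ i t : ℕ, kbar ≤ i → i < dbar → kbar ≤ t → t < dbar →
      m i (t * u + (u - 1)) = 0) :
    ∀ e : ℕ, e < nbar → ∀ i : ℕ, i < dbar → ∀ g : ℕ, g < u →
      ∑ j ∈ Jset u kbar dbar u0, m i j * (ξ ^ e * η ^ g) ^ j =
      ∑ j ∈ Finset.range u, hcoef u u0 kbar dbar ξ m e i j * (ξ ^ e * η ^ g) ^ j := by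
  intro e _ i _ g _
  have hpow : ∀ t : ℕ, (ξ ^ e * η ^ g) ^ (t * u) = ξ ^ (e * t * u) := by
    intro t
    have hη1 : η ^ u = 1 := hη ▸ pow_orderOf_eq_one η
    rw [mul_pow, ← pow_mul, ← pow_mul, show g * (t * u) = u * (g * t) by ring, pow_mul η u, hη1,
      one_pow, mul_one, mul_assoc]
  have hrhs : ∀ r ∈ Finset.range u,
      hcoef u u0 kbar dbar ξ m e i r * (ξ ^ e * η ^ g) ^ r =
        ∑ t ∈ Finset.range (rowLen u kbar dbar u0 r),
          m i (t * u + r) * (ξ ^ e * η ^ g) ^ (t * u + r) := by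
    intro r hr
    rw [hcoef_eq ξ m e i (Finset.mem_range.mp hr), Finset.sum_mul]
    refine Finset.sum_congr rfl fun t _ => ?_
    rw [pow_add, hpow, mul_assoc]
  rw [Finset.sum_congr rfl hrhs, Finset.sum_sigma']
  have hupos : 0 < u := by omega
  -- Reindex by Euclidean division by `u`: the exponent `j` corresponds to the pair `(j % u, j / u)`.
  refine Finset.sum_bij' (fun j _ => (⟨j % u, j / u⟩ : (_ : ℕ) × ℕ)) (fun p _ => p.2 * u + p.1)
    ?_ ?_ ?_ ?_ ?_
  · intro j hj
    have hmod := Nat.mod_lt j hupos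
    rw [← Nat.div_add_mod' j u, mem_Jset_iff hkd hu0 hmod] at hj
    simpa using ⟨hmod, hj⟩
  · rintro ⟨r, t⟩ hp
    simp only [Finset.mem_sigma, Finset.mem_range] at hp
    exact (mem_Jset_iff hkd hu0 hp.1).mpr hp.2
  · intro j _
    exact Nat.div_add_mod' j u
  · rintro ⟨r, t⟩ hp
    simp only [Finset.mem_sigma, Finset.mem_range] at hp
    have hmod : (t * u + r) % u = r := by
      rw [Nat.mul_add_mod', Nat.mod_eq_of_lt hp.1]
    have hdiv : (t * u + r) / u = t := by
      rw [add_comm, Nat.add_mul_div_right _ _ hupos, Nat.div_eq_of_lt hp.1, zero_add]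
    simp only [hmod, hdiv]
  · intro j _
    simp only [Nat.div_add_mod']
end

section
/- (Lemma 2, second part: MBR reconstruction at the rack level.) Let E ⊆ {0,…,n̄−1} be any set of k̄ rack indices. If M₁ and M₁' are two d̄ × d̄ symmetric matrices over F, each of the block form [[S, T],[Tᵗ, 0]] with S a symmetric k̄ × k̄ matrix, T a k̄ × (d̄−k̄) matrix, and zero lower-right (d̄−k̄) × (d̄−k̄) block, and if M₁ φ_e = M₁' φ_e for every e ∈ E, then M₁ = M₁'. -/
/-!
The difference `D = M₁ - M₁'` is symmetric, has zero lower-right block, and kills `φ_e` for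
`e ∈ E`. Because `ξ` is primitive and `nbar * u < |F|`, the `kbar` evaluation points `ξ ^ (e * u)`
are distinct, so a vector supported on the first `kbar` coordinates and orthogonal to all these
`φ_e` is the coefficient vector of a polynomial of degree `< kbar` with `kbar` roots, hence zero
(`eq_zero_of_support_of_orthogonal`). The lower rows of `D` have that support by the zero block, so
they vanish; by symmetry the right-hand columns vanish too, so every row of `D` now has that
support and vanishes as well.
-/

/-- Vandermonde nondegeneracy: a vector supported on its first `#E` coordinates, whose polynomial
vanishes at the `#E` distinct points `x e`, is zero. -/
theorem eq_zero_of_support_of_orthogonal {F : Type*} [Field F] {d : ℕ} (E : Finset ℕ) (x : ℕ → F)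
    (hx : Set.InjOn x E) (v : Fin d → F) (hv : ∀ i : Fin d, E.card ≤ (i : ℕ) → v i = 0)
    (h : ∀ e ∈ E, ∑ i : Fin d, v i * x e ^ (i : ℕ) = 0) : v = 0 := by
  have hp : (∑ i : Fin d, Polynomial.monomial (i : ℕ) (v i)) = 0 := by
    refine Polynomial.eq_zero_of_degree_lt_of_eval_index_eq_zero E hx ?_ ?_
    · rw [Polynomial.degree_lt_iff_coeff_zero]
      intro m hm
      rw [Polynomial.finsetSum_coeff]
      refine Finset.sum_eq_zero fun i _ => ?_
      rw [Polynomial.coeff_monomial]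
      split_ifs with him
      · exact hv i (him ▸ hm)
      · rfl
    · intro e he
      simpa [Polynomial.eval_finsetSum, Polynomial.eval_monomial] using h e he
  funext j
  have hj := congrArg (fun p => Polynomial.coeff p (j : ℕ)) hp
  simpa [Polynomial.finsetSum_coeff, Polynomial.coeff_monomial, Fin.val_inj] using hj


/-- Lemma 2, second part: MBR reconstruction at the rack level:
two d̄ × d̄ symmetric matrices of block form [[S, T],[Tᵗ, 0]] agreeing on
M₁ φ_e for k̄ rack indices e are equal. -/
theorem stmt7
    (u nbar kbar dbar : ℕ)
    (hu : 2 ≤ u) (hnbar : 2 ≤ nbar)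
    (hkbar : 1 ≤ kbar) (hkd : kbar ≤ dbar) (hdbar : dbar ≤ nbar - 1)
    (F : Type*) [Field F] [Fintype F]
    (hcard : nbar * u < Fintype.card F)
    (ξ : F) (hξ : orderOf ξ = Fintype.card F - 1)
    (M₁ M₁' : Matrix (Fin dbar) (Fin dbar) F)
    (hsym : M₁.IsSymm) (hsym' : M₁'.IsSymm)
    (hzero : ∀ i t : Fin dbar, kbar ≤ (i : ℕ) → kbar ≤ (t : ℕ) → M₁ i t = 0)
    (hzero' : ∀ i t : Fin dbar, kbar ≤ (i : ℕ) → kbar ≤ (t : ℕ) → M₁' i t = 0)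
    (E : Finset ℕ) (hE : ∀ e ∈ E, e < nbar) (hEcard : E.card = kbar)
    (hagree : ∀ e ∈ E,
      M₁.mulVec (fun i : Fin dbar => (ξ ^ (e * u)) ^ (i : ℕ)) =
      M₁'.mulVec (fun i : Fin dbar => (ξ ^ (e * u)) ^ (i : ℕ))) :
    M₁ = M₁' := by
  have hinj : Set.InjOn (fun e : ℕ => ξ ^ (e * u)) E := by
    -- all exponents `e * u` lie below the order of `ξ`
    have hlt : ∀ e ∈ E, e * u < orderOf ξ := by
      intro e he
      have h1 : (e + 1) * u ≤ nbar * u := Nat.mul_le_mul_right u (hE e he)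
      rw [hξ]
      rw [add_mul] at h1
      omega
    intro a ha b hb hab
    exact Nat.eq_of_mul_eq_mul_right (by omega)
      (pow_injOn_Iio_orderOf (hlt a ha) (hlt b hb) hab)
  have hrow : ∀ i : Fin dbar, (∀ t : Fin dbar, kbar ≤ (t : ℕ) → M₁ i t = M₁' i t) →
      ∀ t, M₁ i t = M₁' i t := by
    intro i hi t
    have h0 := eq_zero_of_support_of_orthogonal E (fun e => ξ ^ (e * u)) hinj
      (fun t => M₁ i t - M₁' i t)
      (fun t ht => sub_eq_zero.mpr (hi t (hEcard ▸ ht)))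
      (fun e he => by
        have := congrFun (hagree e he) i
        simp only [Matrix.mulVec, dotProduct] at this
        simp only [sub_mul, Finset.sum_sub_distrib, this, sub_self])
    exact sub_eq_zero.mp (congrFun h0 t)
  have hlow : ∀ i t : Fin dbar, kbar ≤ (i : ℕ) → M₁ i t = M₁' i t := fun i t hi =>
    hrow i (fun t ht => by rw [hzero i t hi ht, hzero' i t hi ht]) t
  ext i t
  refine hrow i (fun t ht => ?_) t
  rw [← hsym.apply, ← hsym'.apply]
  exact hlow t i ht
end

section
/- (Local repair within a rack.) Fix e ∈ {0,…,n̄−1} and g* ∈ {0,…,u−1}, and let M, M' be two message matrices with encoding polynomials f_i, f'_i and local coefficients h^(e)_{i,j}, h'^(e)_{i,j}. If for some i ∈ {0,…,d̄−1} we have f_i(λ_(e,g)) = f'_i(λ_(e,g)) for all g ∈ {0,…,u−1} with g ≠ g*, and h^(e)_{i,u−1} = h'^(e)_{i,u−1}, then f_i(λ_(e,g*)) = f'_i(λ_(e,g*)). -/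
/-- Orthogonality of the characters `g ↦ η ^ (g * j)` and `g ↦ η ^ (-g)`. -/
theorem geom_weight_eq_zero {F : Type*} [Field F] {η : F} {u : ℕ} (hη : orderOf η = u) {j : ℕ}
    (hj : ¬ u ∣ j + 1) : ∑ g ∈ Finset.range u, η ^ g * (η ^ g) ^ j = 0 := by
  have h1 : η ^ (j + 1) ≠ 1 := fun h => hj (hη ▸ orderOf_dvd_of_pow_eq_one h)
  have h2 : (η ^ (j + 1)) ^ u = 1 := by
    rw [← pow_mul, mul_comm, pow_mul, ← hη, pow_orderOf_eq_one, one_pow]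
  have h3 := geom_sum_eq h1 u
  rw [h2, sub_self, zero_div] at h3
  rw [← h3]
  refine Finset.sum_congr rfl fun g _ => ?_
  ring

/-- `J₂` has no index congruent to `-1` modulo `u`: such an index below `k̄ u + u₀` is
`t u + (u - 1)` with `t < k̄ ≤ d̄`, because `u₀ ≤ u - 1`. -/
theorem mem_J1_of_dvd {u kbar dbar u0 j : ℕ} (hkd : kbar ≤ dbar) (hu0 : u0 < u)
    (hj : j ∈ Jset u kbar dbar u0) (hd : u ∣ j + 1) : j ∈ J1 u dbar := by
  rcases Finset.mem_union.1 hj with h | h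
  · exact h
  have hlt := Finset.mem_range.1 (Finset.mem_sdiff.1 h).1
  obtain ⟨s, hs⟩ := hd
  obtain _ | t := s
  · omega
  rw [Nat.mul_succ, mul_comm] at hs
  refine Finset.mem_image.2 ⟨t, Finset.mem_range.2 ?_, by omega⟩
  by_contra hcon
  have := Nat.mul_le_mul_right u (show kbar ≤ t by omega)
  omega

/-- The weighted sum over a rack of a polynomial supported on `J` depends only on its
coefficients at `J₁`, through the leading local coefficient. -/
theorem weighted_rack_sum {F : Type*} [Field F] {u kbar dbar u0 : ℕ} (hkd : kbar ≤ dbar)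
    (hu0 : u0 < u) (ξ : F) {η : F} (hη : orderOf η = u) (c : ℕ → F) (e : ℕ) :
    ∑ g ∈ Finset.range u, η ^ g * ∑ j ∈ Jset u kbar dbar u0, c j * (ξ ^ e * η ^ g) ^ j =
      u * ξ ^ (e * (u - 1)) *
        ∑ t ∈ Finset.range dbar, c (t * u + (u - 1)) * ξ ^ (e * t * u) := by
  have hswap : ∑ g ∈ Finset.range u, η ^ g * ∑ j ∈ Jset u kbar dbar u0, c j * (ξ ^ e * η ^ g) ^ j =
      ∑ j ∈ Jset u kbar dbar u0,
        c j * (ξ ^ e) ^ j * ∑ g ∈ Finset.range u, η ^ g * (η ^ g) ^ j := by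
    simp_rw [Finset.mul_sum]
    rw [Finset.sum_comm]
    refine Finset.sum_congr rfl fun j _ => Finset.sum_congr rfl fun g _ => ?_
    rw [mul_pow]; ring
  have hsub : J1 u dbar ⊆ Jset u kbar dbar u0 := Finset.subset_union_left
  rw [hswap, ← Finset.sum_subset hsub, J1, Finset.sum_image, Finset.mul_sum]
  · refine Finset.sum_congr rfl fun t _ => ?_
    have hone : ∑ g ∈ Finset.range u, η ^ g * (η ^ g) ^ (t * u + (u - 1)) = u := by
      have : ∀ g ∈ Finset.range u, η ^ g * (η ^ g) ^ (t * u + (u - 1)) = 1 := by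
        intro g _
        rw [← pow_succ', show t * u + (u - 1) + 1 = u * (t + 1) by
            rw [Nat.mul_succ, mul_comm]; omega,
          ← pow_mul, ← mul_assoc, mul_comm g u, mul_assoc, pow_mul, ← hη, pow_orderOf_eq_one,
          one_pow]
      rw [Finset.sum_congr rfl this]; simp
    rw [hone, ← pow_mul, mul_add, pow_add, ← mul_assoc]
    ring
  · intro a _ b _ hab
    exact Nat.eq_of_mul_eq_mul_right (by omega : 0 < u) (Nat.add_right_cancel hab)
  · intro j hj hj1
    rw [geom_weight_eq_zero hη fun hd => hj1 (mem_J1_of_dvd hkd hu0 hj hd), mul_zero]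

/-- Local repair within a rack: if for some row i the codes of two
message matrices agree on the u−1 surviving nodes of rack e and their leading local
coefficients agree, then they agree on the failed node (e, g*). -/
theorem stmt10
    (u nbar kbar dbar u0 : ℕ)
    (hu : 2 ≤ u) (hnbar : 2 ≤ nbar)
    (hkbar : 1 ≤ kbar) (hkd : kbar ≤ dbar) (hdbar : dbar ≤ nbar - 1)
    (hu0 : u0 < u)
    (F : Type*) [Field F] [Fintype F]
    (hdvd : u ∣ Fintype.card F - 1) (hcard : nbar * u < Fintype.card F)
    (ξ η : F) (hξ : orderOf ξ = Fintype.card F - 1) (hη : orderOf η = u)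
    (m m' : ℕ → ℕ → F)
    (hsym : ∀ i t : ℕ, i < dbar → t < dbar →
      m i (t * u + (u - 1)) = m t (i * u + (u - 1)))
    (hzero : ∀ i t : ℕ, kbar ≤ i → i < dbar → kbar ≤ t → t < dbar →
      m i (t * u + (u - 1)) = 0)
    (hsym' : ∀ i t : ℕ, i < dbar → t < dbar →
      m' i (t * u + (u - 1)) = m' t (i * u + (u - 1)))
    (hzero' : ∀ i t : ℕ, kbar ≤ i → i < dbar → kbar ≤ t → t < dbar →
      m' i (t * u + (u - 1)) = 0)
    (e : ℕ) (he : e < nbar) (gstar : ℕ) (hgstar : gstar < u)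
    (i : ℕ) (hi : i < dbar)
    (hsurv : ∀ g : ℕ, g < u → g ≠ gstar →
      ∑ j ∈ Jset u kbar dbar u0, m i j * (ξ ^ e * η ^ g) ^ j =
      ∑ j ∈ Jset u kbar dbar u0, m' i j * (ξ ^ e * η ^ g) ^ j)
    (hlead : hcoef u u0 kbar dbar ξ m e i (u - 1) = hcoef u u0 kbar dbar ξ m' e i (u - 1)) :
    ∑ j ∈ Jset u kbar dbar u0, m i j * (ξ ^ e * η ^ gstar) ^ j =
    ∑ j ∈ Jset u kbar dbar u0, m' i j * (ξ ^ e * η ^ gstar) ^ j := by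
  have h1 : ¬ (u - 1 < u0) := by omega
  simp only [hcoef, if_neg h1, lt_irrefl, if_false] at hlead
  have key := weighted_rack_sum hkd hu0 ξ hη (fun j => m i j - m' i j) e
  simp only [sub_mul, Finset.sum_sub_distrib] at key
  rw [hlead, sub_self, mul_zero, Finset.sum_eq_single_of_mem gstar (Finset.mem_range.2 hgstar)
    fun g hg hne => by rw [hsurv g (Finset.mem_range.1 hg) hne, sub_self, mul_zero]] at key
  have hη0 : η ≠ 0 := by
    rintro rfl
    rw [orderOf_zero] at hη
    omega
  exact sub_eq_zero.1 ((mul_eq_zero.1 key).resolve_left (pow_ne_zero _ hη0))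
end

section
/- (Theorem 3: systematic recovery of M₁.) If M₁ and M₁' are two d̄ × d̄ symmetric matrices over F, each of the block form [[S, T],[Tᵗ, 0]] with S a symmetric k̄ × k̄ matrix, T a k̄ × (d̄−k̄) matrix, and zero lower-right (d̄−k̄) × (d̄−k̄) block, and if (M₁ Φ)_{i,e} = (M₁' Φ)_{i,e} for every e ∈ {0,…,k̄−1} and every i ∈ {0,…,e} ∪ {k̄,…,d̄−1}, then M₁ = M₁'. -/
/-!
Work with the difference `D = M₁ - M₁'`, which is symmetric with zero lower-right block, and write
`x e = ξ ^ (e * u)`. Row `i` of `D` is the coefficient vector of a polynomial, and `(D Φ) i e` is its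
value at `x e`. Since `ξ` has order `|F| - 1 ≥ nbar * u`, the points `x 0, …, x (kbar - 1)` are nonzero
and pairwise distinct.

* A row with index `i ≥ kbar` is supported on the columns below `kbar` and vanishes at the `kbar`
  points `x 0, …, x (kbar - 1)`, so it is zero. By symmetry the columns from `kbar` on are zero.
* A row with index `i < kbar` is handled by strong induction on `i`: by symmetry and the vanishing of
  the previous rows it is supported on the columns `i, …, kbar - 1`, and it vanishes at the `kbar - i`
  points `x i, …, x (kbar - 1)`, so it is zero.

Both cases use `row_eq_zero_of_support`, an application of Vandermonde invertibility.
-/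

/-- Column e of the Vandermonde-type matrix Φ:
φ_e = (1, ξ^{e·u}, (ξ^{e·u})², …, (ξ^{e·u})^{d̄−1})ᵗ, so that
(M₁ Φ)_{i,e} = (M₁.mulVec (phiCol u d̄ ξ e)) i. -/
def phiCol {F : Type*} [Field F] (u dbar : ℕ) (ξ : F) (e : ℕ) : Fin dbar → F :=
  fun i => (ξ ^ (e * u)) ^ (i : ℕ)

/-- A polynomial with coefficients supported in degrees `[a, k)` that vanishes at `k - a` distinct
nonzero points is zero: dividing by the `a`-th power of the variable leaves a square Vandermonde
system. -/
lemma row_eq_zero_of_support {F : Type*} [Field F] {d a k : ℕ} (hkd : k ≤ d)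
    (c : Fin d → F) (x : ℕ → F) (hx0 : ∀ e, x e ≠ 0) (hinj : Set.InjOn x (Set.Iio k))
    (hlow : ∀ j : Fin d, (j : ℕ) < a → c j = 0) (hhigh : ∀ j : Fin d, k ≤ (j : ℕ) → c j = 0)
    (hroot : ∀ e, a ≤ e → e < k → ∑ j : Fin d, c j * x e ^ (j : ℕ) = 0) (j : Fin d) :
    c j = 0 := by
  let c' : ℕ → F := fun n => if h : n < d then c ⟨n, h⟩ else 0
  have hc' : ∀ j : Fin d, c j = c' j := fun j => by simp [c']
  have hv : (fun l : Fin (k - a) => c' (a + l)) = 0 := by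
    refine Matrix.eq_zero_of_forall_index_sum_pow_mul_eq_zero
      (f := fun l : Fin (k - a) => x (a + l)) ?_ ?_
    · intro l l' h
      have := hinj (Set.mem_Iio.2 (by omega)) (Set.mem_Iio.2 (by omega)) h
      exact Fin.ext (by omega)
    · intro l
      have h := hroot (a + l) (by omega) (by omega)
      simp only [hc'] at h
      rw [Fin.sum_univ_eq_sum_range (fun n => c' n * x (a + l) ^ n) d,
        ← Finset.sum_subset (s₁ := Finset.Ico a k), Finset.sum_Ico_eq_sum_range] at h
      · rw [Fin.sum_univ_eq_sum_range (fun n => x (a + l) ^ n * c' (a + n)) (k - a)]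
        refine (mul_eq_zero.1 ?_).resolve_left (pow_ne_zero a (hx0 (a + l)))
        rw [Finset.mul_sum, ← h]
        exact Finset.sum_congr rfl fun n _ => by ring
      · intro n hn
        simp only [Finset.mem_Ico, Finset.mem_range] at hn ⊢
        omega
      · intro n hn hn'
        simp only [Finset.mem_Ico, Finset.mem_range] at hn hn'
        have hz : c ⟨n, hn⟩ = 0 := by
          rcases Nat.lt_or_ge n a with h1 | h1
          · exact hlow _ h1
          · exact hhigh _ (by simp only; omega)
        simp [c', hn, hz]
  rcases Nat.lt_or_ge j a with h1 | h1
  · exact hlow j h1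
  rcases Nat.lt_or_ge j k with h2 | h2
  · have := congrFun hv ⟨j - a, by omega⟩
    rw [hc' j]
    simpa [Nat.add_sub_cancel' h1] using this
  · exact hhigh j h2

/-- Theorem 3: systematic recovery of M₁: two d̄ × d̄ symmetric
matrices of block form [[S, T],[Tᵗ, 0]] whose products with Φ agree at the entries
(i, e) with e ∈ {0,…,k̄−1} and i ∈ {0,…,e} ∪ {k̄,…,d̄−1} are equal. -/
theorem stmt12
    (u nbar kbar dbar : ℕ)
    (hu : 2 ≤ u) (hnbar : 2 ≤ nbar)
    (hkbar : 1 ≤ kbar) (hkd : kbar ≤ dbar) (hdbar : dbar ≤ nbar - 1)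
    (F : Type*) [Field F] [Fintype F]
    (hcard : nbar * u < Fintype.card F)
    (ξ : F) (hξ : orderOf ξ = Fintype.card F - 1)
    (M₁ M₁' : Matrix (Fin dbar) (Fin dbar) F)
    (hsym : M₁.IsSymm) (hsym' : M₁'.IsSymm)
    (hzero : ∀ i t : Fin dbar, kbar ≤ (i : ℕ) → kbar ≤ (t : ℕ) → M₁ i t = 0)
    (hzero' : ∀ i t : Fin dbar, kbar ≤ (i : ℕ) → kbar ≤ (t : ℕ) → M₁' i t = 0)
    (hagree : ∀ e : ℕ, e < kbar → ∀ i : Fin dbar, ((i : ℕ) ≤ e ∨ kbar ≤ (i : ℕ)) →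
      M₁.mulVec (phiCol u dbar ξ e) i = M₁'.mulVec (phiCol u dbar ξ e) i) :
    M₁ = M₁' := by
  set x : ℕ → F := fun e => ξ ^ (e * u) with hx
  have hξ0 : ξ ≠ 0 := by
    rintro rfl
    rw [orderOf_zero] at hξ
    have : 4 ≤ nbar * u := Nat.mul_le_mul hnbar hu
    omega
  have hx0 : ∀ e, x e ≠ 0 := fun e => pow_ne_zero _ hξ0
  have hinj : Set.InjOn x (Set.Iio kbar) := by
    -- the exponents `e * u` with `e < kbar < nbar` stay below the order of `ξ`
    have hlt : ∀ e, e < kbar → e * u < orderOf ξ := fun e he => by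
      have : e * u < nbar * u := Nat.mul_lt_mul_of_pos_right (by omega) (by omega)
      omega
    intro e he e' he' h
    exact Nat.eq_of_mul_eq_mul_right (by omega) (pow_injOn_Iio_orderOf (hlt e he) (hlt e' he') h)
  let D : Matrix (Fin dbar) (Fin dbar) F := M₁ - M₁'
  have hD : ∀ i j, D i j = D j i := fun i j => (hsym.sub hsym').apply j i
  have hroot : ∀ e, e < kbar → ∀ i : Fin dbar, ((i : ℕ) ≤ e ∨ kbar ≤ (i : ℕ)) →
      ∑ j : Fin dbar, D i j * x e ^ (j : ℕ) = 0 := by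
    intro e he i hi
    have h := sub_eq_zero.2 (hagree e he i hi)
    rw [← Pi.sub_apply, ← Matrix.sub_mulVec] at h
    exact h
  have hbot : ∀ i : Fin dbar, kbar ≤ (i : ℕ) → ∀ j, D i j = 0 := fun i hi =>
    row_eq_zero_of_support (a := 0) hkd (D i) x hx0 hinj (fun j hj => absurd hj (by omega))
      (fun j hj => by simp [D, hzero i j hi hj, hzero' i j hi hj])
      (fun e _ he => hroot e he i (Or.inr hi))
  have htop : ∀ n : ℕ, ∀ i : Fin dbar, (i : ℕ) = n → ∀ j, D i j = 0 := by
    intro n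
    induction n using Nat.strong_induction_on with
    | _ n ih =>
      rintro i rfl
      exact row_eq_zero_of_support hkd (D i) x hx0 hinj
        (fun j hj => (hD i j).trans (ih j hj j rfl i))
        (fun j hj => (hD i j).trans (hbot j hj i))
        (fun e hie he => hroot e he i (Or.inl hie))
  ext i j
  exact sub_eq_zero.1 (htop i i rfl j)
end
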